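/- arXiv:2103.15000 — 6 statements merged into one kernel-verified Lean document; each statement's English description precedes it below -/
import Mathlib

section
/- Let 0 < α < 1 and let (a_m)_{m≥0}, (b_m)_{m≥0} be real sequences such that the power series κ₁(t) = ∑_{m=0}^∞ a_m t^m and k₁(t) = ∑_{m=0}^∞ b_m t^m converge for all t ∈ ℝ, a₀ ≠ 0, and the coefficients satisfy a₀ b₀ = 1 and ∑_{m=0}^{N} Γ(m+1−α) Γ(α+N−m) a__{N−m} b_m = 0 for all N ≥ 1. Then the kernels κ(t) = h_α(t) κ₁(t) and k(t) = h_{1−α}(t) k₁(t) satisfy the Sonine condition (κ * k)(t) = 1 for all t > 0. -/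
open Real MeasureTheory Set Filter Topology

/-- The Laplace convolution `(f * g)(t) = ∫₀ᵗ f(t-τ) g(τ) dτ`. -/
noncomputable def lconv (f g : ℝ → ℝ) : ℝ → ℝ :=
  fun t => ∫ τ in (0:ℝ)..t, f (t - τ) * g τ

/-- The space `C_{-1}(0,∞)`: functions of the form `t^p f₁(t)` with `p > -1`
and `f₁` continuous on `[0,∞)`. -/
def Cm1 (f : ℝ → ℝ) : Prop :=
  ∃ p : ℝ, -1 < p ∧ ∃ f₁ : ℝ → ℝ, ContinuousOn f₁ (Set.Ici 0) ∧
    ∀ t : ℝ, 0 < t → f t = t ^ p * f₁ t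

/-- The subspace `C_{-1,0}(0,∞)`: functions of the form `t^p f₁(t)` with `-1 < p < 0`
and `f₁` continuous on `[0,∞)`. -/
def Cm10 (f : ℝ → ℝ) : Prop :=
  ∃ p : ℝ, -1 < p ∧ p < 0 ∧ ∃ f₁ : ℝ → ℝ, ContinuousOn f₁ (Set.Ici 0) ∧
    ∀ t : ℝ, 0 < t → f t = t ^ p * f₁ t

theorem aux_beta (u v t : ℝ) (hu : 0 < u) (hv : 0 < v) (ht : 0 < t) :
    ∫ τ in Ioo (0:ℝ) t, τ ^ (v - 1) * (t - τ) ^ (u - 1) =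
      t ^ (v + u - 1) * (Real.Gamma v * Real.Gamma u / Real.Gamma (v + u)) := by
  rw [← integral_Ioc_eq_integral_Ioo, ← intervalIntegral.integral_of_le ht.le]
  have h := Complex.betaIntegral_scaled (v : ℂ) (u : ℂ) ht
  rw [Complex.betaIntegral_eq_Gamma_mul_div _ _ (by simpa using hv) (by simpa using hu)] at h
  have h2 : (∫ x in (0:ℝ)..t, (x:ℂ) ^ ((v:ℂ) - 1) * ((t:ℂ) - x) ^ ((u:ℂ) - 1)) =
      ∫ x in (0:ℝ)..t, (((x ^ (v - 1) * (t - x) ^ (u - 1) : ℝ)) : ℂ) := by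
    apply intervalIntegral.integral_congr
    intro x hx
    rw [uIcc_of_le ht.le] at hx
    simp only
    rw [Complex.ofReal_mul, Complex.ofReal_cpow hx.1, Complex.ofReal_cpow (by linarith [hx.2])]
    push_cast
    rfl
  rw [h2, intervalIntegral.integral_ofReal] at h
  rw [← Complex.ofReal_inj, h]
  push_cast [Complex.ofReal_cpow ht.le, ← Complex.Gamma_ofReal]
  rfl

theorem aux_int (u v t : ℝ) (hu : 0 < u) (hv : 0 < v) (ht : 0 < t) :
    IntegrableOn (fun τ : ℝ => τ ^ (v - 1) * (t - τ) ^ (u - 1)) (Ioo 0 t) := by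
  apply Integrable.of_integral_ne_zero
  rw [aux_beta u v t hu hv ht]
  have := Real.Gamma_pos_of_pos hu
  have := Real.Gamma_pos_of_pos hv
  have := Real.Gamma_pos_of_pos (add_pos hv hu)
  positivity

/-- Sonine's class of kernels. If `κ(t) = h_α(t) ∑ aₘ tᵐ` and
`k(t) = h_{1-α}(t) ∑ bₘ tᵐ` with everywhere-convergent power series whose coefficients
satisfy `a₀b₀ = 1` and `∑_{m=0}^{N} Γ(m+1-α) Γ(α+N-m) a_{N-m} b_m = 0` for `N ≥ 1`,
then `(κ * k)(t) = 1` for all `t > 0`. -/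
theorem statement1 (α : ℝ) (hα0 : 0 < α) (hα1 : α < 1) (a b : ℕ → ℝ)
    (ha_conv : ∀ t : ℝ, Summable fun m : ℕ => a m * t ^ m)
    (hb_conv : ∀ t : ℝ, Summable fun m : ℕ => b m * t ^ m)
    (ha0 : a 0 ≠ 0) (hab0 : a 0 * b 0 = 1)
    (hab : ∀ N : ℕ, 1 ≤ N →
      ∑ m ∈ Finset.range (N + 1),
        Real.Gamma ((m : ℝ) + 1 - α) * Real.Gamma (α + (N : ℝ) - (m : ℝ)) *
          a (N - m) * b m = 0)
    (κ k : ℝ → ℝ)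
    (hκ : ∀ t : ℝ, 0 < t →
      κ t = t ^ (α - 1) / Real.Gamma α * ∑' m : ℕ, a m * t ^ m)
    (hk : ∀ t : ℝ, 0 < t →
      k t = t ^ ((1 - α) - 1) / Real.Gamma (1 - α) * ∑' m : ℕ, b m * t ^ m) :
    ∀ t : ℝ, 0 < t → lconv κ k t = 1 := by
  intro t ht
  have hG1 := Real.Gamma_pos_of_pos hα0
  have hG2 := Real.Gamma_pos_of_pos (sub_pos.2 hα1)
  set G1 := Real.Gamma α with hG1d
  set G2 := Real.Gamma (1 - α) with hG2d
  let w : ℕ × ℕ → ℝ → ℝ := fun p τ =>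
    τ ^ ((1 - α + p.2) - 1) * (t - τ) ^ ((α + p.1) - 1)
  let F : ℕ × ℕ → ℝ → ℝ := fun p τ => (a p.1 * b p.2 / (G1 * G2)) * w p τ
  have hu : ∀ n : ℕ, 0 < α + n := fun n => by positivity
  have hv : ∀ n : ℕ, 0 < 1 - α + n := fun n => by
    have := sub_pos.2 hα1
    positivity
  have hwint : ∀ p, IntegrableOn (w p) (Ioo 0 t) := fun p => aux_int _ _ t (hu p.1) (hv p.2) ht
  have hwval : ∀ p : ℕ × ℕ, ∫ τ in Ioo (0:ℝ) t, w p τ =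
      t ^ (p.1 + p.2) * (Real.Gamma (1 - α + p.2) * Real.Gamma (α + p.1) / (p.1 + p.2).factorial) := by
    intro p
    have := aux_beta _ _ t (hu p.1) (hv p.2) ht
    rw [show (1 - α + p.2) + (α + (p.1:ℝ)) = ((p.1 + p.2 : ℕ) : ℝ) + 1 by push_cast; ring,
      Real.Gamma_nat_eq_factorial, add_sub_cancel_right, Real.rpow_natCast] at this
    exact this
  have hwpow : ∀ p : ℕ × ℕ, ∀ τ ∈ Ioo (0:ℝ) t, w p τ =
      (τ ^ ((1 - α) - 1) * (t - τ) ^ (α - 1)) * ((t - τ) ^ p.1 * τ ^ p.2) := by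
    intro p τ hτ
    have h1 : 0 < t - τ := sub_pos.2 hτ.2
    simp only [w]
    rw [show (1 - α + p.2) - 1 = ((1 - α) - 1) + (p.2 : ℝ) by ring,
      show (α + p.1) - 1 = (α - 1) + (p.1 : ℝ) by ring,
      Real.rpow_add hτ.1, Real.rpow_add h1, Real.rpow_natCast, Real.rpow_natCast]
    ring
  have hsumA : ∀ x y : ℝ, Summable fun p : ℕ × ℕ => (a p.1 * x ^ p.1) * (b p.2 * y ^ p.2) :=
    fun x y => summable_mul_of_summable_norm (ha_conv x).norm (hb_conv y).norm
  have hFint : ∀ p, Integrable (F p) (volume.restrict (Ioo 0 t)) := fun p =>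
    (hwint p).const_mul _
  have hFsum : Summable fun p => ∫ τ in Ioo (0:ℝ) t, ‖F p τ‖ := by
    refine Summable.of_nonneg_of_le (fun p => integral_nonneg fun τ => norm_nonneg _) ?_
      (((hsumA t t).norm.mul_right (1 / (G1 * G2))).mul_right (∫ τ in Ioo (0:ℝ) t, w (0, 0) τ))
    intro p
    rw [← integral_const_mul]
    refine setIntegral_mono_on (hFint p).norm ((hwint (0,0)).const_mul _) measurableSet_Ioo ?_
    intro τ hτ
    have h1 : 0 < t - τ := sub_pos.2 hτ.2
    have h2 : 0 < τ := hτ.1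
    simp only [F]
    rw [hwpow p τ hτ, hwpow (0,0) τ hτ]
    simp only [norm_mul, norm_div, norm_pow, Real.norm_eq_abs, pow_zero, mul_one]
    rw [abs_of_pos (Real.rpow_pos_of_pos h1 _), abs_of_pos (Real.rpow_pos_of_pos h2 _),
      abs_of_pos h1, abs_of_pos h2, abs_of_pos ht, abs_of_pos hG1, abs_of_pos hG2]
    have e1 : (t - τ) ^ p.1 ≤ t ^ p.1 := by gcongr; linarith
    have e2 : τ ^ p.2 ≤ t ^ p.2 := by gcongr; exact hτ.2.le
    have e3 : (t - τ) ^ p.1 * τ ^ p.2 ≤ t ^ p.1 * t ^ p.2 := by gcongr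
    have e4 : 0 ≤ |a p.1| * |b p.2| / (G1 * G2) * (τ ^ ((1 - α) - 1) * (t - τ) ^ (α - 1)) := by
      positivity
    have := mul_le_mul_of_nonneg_left e3 e4
    calc _ = _ := by ring
      _ ≤ _ := this
      _ = _ := by ring
  have hmain := hasSum_integral_of_summable_integral_norm hFint hFsum
  have hL : lconv κ k t = ∫ τ in Ioo (0:ℝ) t, ∑' p, F p τ := by
    unfold lconv
    rw [intervalIntegral.integral_of_le ht.le, integral_Ioc_eq_integral_Ioo]
    refine setIntegral_congr_fun measurableSet_Ioo ?_
    intro τ hτ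
    have h1 : 0 < t - τ := sub_pos.2 hτ.2
    simp only
    rw [hκ _ h1, hk _ hτ.1]
    have e := (ha_conv (t - τ)).tsum_mul_tsum (hb_conv τ) (hsumA (t - τ) τ)
    have e2 : ∀ p, F p τ = (τ ^ ((1 - α) - 1) * (t - τ) ^ (α - 1) / (G1 * G2)) *
        ((a p.1 * (t - τ) ^ p.1) * (b p.2 * τ ^ p.2)) := by
      intro p
      simp only [F]
      rw [hwpow p τ hτ]
      ring
    simp_rw [e2]
    rw [tsum_mul_left, ← e]
    field_simp
  rw [hL]
  have hval : ∀ p : ℕ × ℕ, ∫ τ in Ioo (0:ℝ) t, F p τ = (a p.1 * b p.2 / (G1 * G2)) *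
     (t ^ (p.1 + p.2) * (Real.Gamma (1 - α + p.2) * Real.Gamma (α + p.1) / (p.1 + p.2).factorial)) := by
    intro p
    rw [← hwval p, ← integral_const_mul]
  simp_rw [hval] at hmain
  rw [← hmain.tsum_eq]
  have hs := hmain.summable
  rw [← Finset.HasAntidiagonal.sigmaAntidiagonalEquivProd.tsum_eq]
  refine (((Finset.HasAntidiagonal.sigmaAntidiagonalEquivProd.summable_iff).2 hs).tsum_sigma' (fun n => (hasSum_fintype _).summable)).trans ?_
  have hN : ∀ N : ℕ, N ≠ 0 → ∑' c : Finset.HasAntidiagonal.antidiagonal N, (a c.1.1 * b c.1.2 / (G1 * G2)) *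
     (t ^ (c.1.1 + c.1.2) * (Real.Gamma (1 - α + c.1.2) * Real.Gamma (α + c.1.1) /
       (c.1.1 + c.1.2).factorial)) = 0 := by
    intro N hN
    rw [Finset.tsum_subtype (Finset.HasAntidiagonal.antidiagonal N) (fun c : ℕ × ℕ => (a c.1 * b c.2 / (G1 * G2)) *
     (t ^ (c.1 + c.2) * (Real.Gamma (1 - α + c.2) * Real.Gamma (α + c.1) /
       (c.1 + c.2).factorial)))]
    rw [← Finset.Nat.sum_antidiagonal_swap, Finset.Nat.sum_antidiagonal_eq_sum_range_succ_mk]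
    have := hab N (Nat.one_le_iff_ne_zero.2 hN)
    rw [← mul_zero (t ^ N / N.factorial / (G1 * G2)), ← this, Finset.mul_sum]
    refine Finset.sum_congr rfl fun m hm => ?_
    have hm' : m ≤ N := Nat.lt_succ_iff.1 (Finset.mem_range.1 hm)
    simp only [Prod.swap]
    rw [Nat.sub_add_cancel hm', Nat.cast_sub hm', show 1 - α + (m:ℝ) = m + 1 - α by ring,
      show α + ((N:ℝ) - m) = α + N - m by ring]
    ring
  refine (tsum_eq_single 0 (fun N h => hN N h)).trans ?_
  change ∑' c : Finset.HasAntidiagonal.antidiagonal 0, (a c.1.1 * b c.1.2 / (G1 * G2)) *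
     (t ^ (c.1.1 + c.1.2) * (Real.Gamma (1 - α + c.1.2) * Real.Gamma (α + c.1.1) /
       (c.1.1 + c.1.2).factorial)) = 1
  rw [Finset.tsum_subtype (Finset.HasAntidiagonal.antidiagonal 0) (fun c : ℕ × ℕ => (a c.1 * b c.2 / (G1 * G2)) *
     (t ^ (c.1 + c.2) * (Real.Gamma (1 - α + c.2) * Real.Gamma (α + c.1) /
       (c.1 + c.2).factorial)))]
  simp only [Finset.Nat.antidiagonal_zero, Finset.sum_singleton, hab0, Nat.cast_zero, add_zero,
    pow_zero, Nat.factorial_zero, Nat.cast_one, ← hG1d, ← hG2d]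
  field_simp
end

section
/- If κ ∈ C_{−1}(0,∞) and f ∈ C_{−1}(0,∞), then the Laplace convolution κ * f, i.e. t ↦ ∫₀ᵗ κ(t−τ) f(τ) dτ, also belongs to C_{−1}(0,∞). -/
open Real MeasureTheory Set Filter Topology

theorem beta_aux {p q : ℝ} (hp : -1 < p) (hq : -1 < q) :
    IntervalIntegrable (fun s : ℝ => (1 - s) ^ p * s ^ q) volume 0 1 := by
  have h := (Complex.betaIntegral_convergent (u := ((q + 1 : ℝ) : ℂ)) (v := ((p + 1 : ℝ) : ℂ))
    (by rw [Complex.ofReal_re]; linarith) (by rw [Complex.ofReal_re]; linarith)).norm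
  rw [intervalIntegrable_iff_integrableOn_Ioo_of_le zero_le_one] at h ⊢
  refine h.congr_fun ?_ measurableSet_Ioo
  intro x hx
  have h1 : 0 < 1 - x := by linarith [hx.2]
  have e1 : ‖(x : ℂ) ^ (((q + 1 : ℝ) : ℂ) - 1)‖ = x ^ q := by
    rw [Complex.norm_cpow_eq_rpow_re_of_pos hx.1]; simp
  have e2 : ‖(1 - (x : ℂ)) ^ (((p + 1 : ℝ) : ℂ) - 1)‖ = (1 - x) ^ p := by
    rw [show (1 - (x : ℂ)) = ((1 - x : ℝ) : ℂ) by simp,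
      Complex.norm_cpow_eq_rpow_re_of_pos h1]; simp
  simp only [norm_mul, e1, e2]
  ring

theorem cont_aux {p q : ℝ} (hp : -1 < p) (hq : -1 < q) {k g : ℝ → ℝ} (hk : Continuous k)
    (hg : Continuous g) :
    Continuous (fun t : ℝ => ∫ s in (0:ℝ)..1, ((1 - s) ^ p * s ^ q) *
      (k (t * (1 - s)) * g (t * s))) := by
  have hw := beta_aux hp hq
  rw [continuous_iff_continuousAt]
  intro t₀
  have hc : Continuous (fun z : ℝ × ℝ => k (z.1 * (1 - z.2)) * g (z.1 * z.2)) := by fun_prop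
  obtain ⟨C, hC⟩ := ((isCompact_Icc (a := t₀ - 1) (b := t₀ + 1)).prod
    (isCompact_Icc (a := (0:ℝ)) (b := 1))).exists_bound_of_continuousOn hc.continuousOn
  refine intervalIntegral.continuousAt_of_dominated_interval
    (bound := fun s => ‖(1 - s) ^ p * s ^ q‖ * C) ?_ ?_ ?_ ?_
  · refine Eventually.of_forall fun t => ?_
    refine (intervalIntegrable_iff.mp hw).aestronglyMeasurable.mul ?_
    exact (by fun_prop : Continuous fun s : ℝ => k (t * (1 - s)) * g (t * s)).aestronglyMeasurable
  · filter_upwards [Icc_mem_nhds (show t₀ - 1 < t₀ by linarith) (show t₀ < t₀ + 1 by linarith)]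
      with t ht
    refine Eventually.of_forall fun s hs => ?_
    rw [uIoc_of_le zero_le_one] at hs
    rw [norm_mul]
    exact mul_le_mul_of_nonneg_left (hC (t, s) ⟨ht, hs.1.le, hs.2⟩) (norm_nonneg _)
  · exact hw.norm.mul_const C
  · refine Eventually.of_forall fun s _ => ?_
    exact (by fun_prop : Continuous fun t : ℝ => ((1 - s) ^ p * s ^ q) *
      (k (t * (1 - s)) * g (t * s))).continuousAt

theorem ext_aux {k : ℝ → ℝ} (hk : ContinuousOn k (Ici 0)) :
    Continuous (fun t => k (max t 0)) :=
  hk.comp_continuous (by fun_prop) (fun x => mem_Ici.mpr (le_max_right x 0))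

/-- The Laplace convolution maps `C_{-1}(0,∞) × C_{-1}(0,∞)` into
`C_{-1}(0,∞)`. -/
theorem statement2 (κ f : ℝ → ℝ) (hκ : Cm1 κ) (hf : Cm1 f) : Cm1 (lconv κ f) := by
  obtain ⟨p, hp, k, hk, hκe⟩ := hκ
  obtain ⟨q, hq, g, hg, hfe⟩ := hf
  refine ⟨p + q + 1, by linarith, _,
    (cont_aux hp hq (ext_aux hk) (ext_aux hg)).continuousOn, ?_⟩
  intro t ht
  have h := intervalIntegral.mul_integral_comp_mul_left (a := 0) (b := 1)
    (f := fun τ => κ (t - τ) * f τ) t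
  rw [mul_zero, mul_one] at h
  unfold lconv
  rw [← h, rpow_add ht, rpow_one, mul_comm _ t, mul_assoc]
  congr 1
  rw [← intervalIntegral.integral_const_mul, intervalIntegral.integral_of_le zero_le_one,
    intervalIntegral.integral_of_le zero_le_one, integral_Ioc_eq_integral_Ioo,
    integral_Ioc_eq_integral_Ioo]
  refine setIntegral_congr_fun measurableSet_Ioo fun s hs => ?_
  have h1 : 0 < 1 - s := by linarith [hs.2]
  have h2 : 0 < t * (1 - s) := mul_pos ht h1
  have h3 : 0 < t * s := mul_pos ht hs.1
  have h4 : t - t * s = t * (1 - s) := by ring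
  rw [h4, hκe _ h2, hfe _ h3, max_eq_left h2.le, max_eq_left h3.le, mul_rpow ht.le h1.le,
    mul_rpow ht.le hs.1.le, rpow_add ht]
  ring
end

section
/- Let k ∈ C_{−1,0}(0,∞) and let f ∈ C¹_{−1}(0,∞), so that f is continuously differentiable on (0,∞), f and f′ extend continuously to 0, and f′ ∈ C_{−1}(0,∞). Then for every t > 0 the function t ↦ (k * f)(t) is differentiable and d/dt (k * f)(t) = (k * f′)(t) + f(0) k(t); consequently the Caputo-type general fractional derivative satisfies (∗D_{(k)} f)(t) = (k * f′)(t) for t > 0. -/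
open Real MeasureTheory Set Filter Topology

theorem aux_k_int (k : ℝ → ℝ) (hk : Cm10 k) (t : ℝ) (ht : 0 ≤ t) :
    IntervalIntegrable k volume 0 t := by
  obtain ⟨p, hp, _, f₁, hf₁, h⟩ := hk
  have h1 : IntervalIntegrable (fun x : ℝ => x ^ p * f₁ x) volume 0 t := by
    apply (intervalIntegral.intervalIntegrable_rpow' hp).mul_continuousOn
    rw [uIcc_of_le ht]
    exact hf₁.mono (fun x hx => hx.1)
  refine h1.congr ?_
  intro x hx
  rw [uIoc_of_le ht] at hx
  exact (h x hx.1).symm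

theorem aux_k_cont (k : ℝ → ℝ) (hk : Cm10 k) : ContinuousOn k (Set.Ioi 0) := by
  obtain ⟨p, hp, _, f₁, hf₁, h⟩ := hk
  have : ContinuousOn (fun x : ℝ => x ^ p * f₁ x) (Set.Ioi 0) := by
    apply ContinuousOn.mul
    · intro x hx
      exact (Real.continuousAt_rpow_const x p (Or.inl (ne_of_gt hx))).continuousWithinAt
    · exact hf₁.mono Ioi_subset_Ici_self
  exact this.congr (fun x hx => h x hx)

theorem aux_swap (k g : ℝ → ℝ) (t : ℝ) :
    lconv k g t = ∫ s in (0:ℝ)..t, k s * g (t - s) := by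
  have := intervalIntegral.integral_comp_sub_left (a := 0) (b := t)
    (fun s => k s * g (t - s)) t
  simp only [sub_self, sub_zero, sub_sub_cancel] at this
  exact this

theorem aux_main (k P : ℝ → ℝ) (hk : ∀ t, 0 ≤ t → IntervalIntegrable k volume 0 t)
    (hP : Continuous P) (G : ℝ → ℝ) (hG : ∀ x, G x = ∫ s in (0:ℝ)..(max x 0), P s)
    (t : ℝ) (ht : 0 < t) :
    HasDerivAt (fun x => ∫ s in (0:ℝ)..x, k s * G (x - s))
      (∫ s in (0:ℝ)..t, k s * P (t - s)) t := by
  have hprim : ∀ x, HasDerivAt (fun x => ∫ s in (0:ℝ)..x, P s) (P x) x := fun x =>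
    intervalIntegral.integral_hasDerivAt_right (hP.intervalIntegrable _ _)
      (hP.stronglyMeasurableAtFilter _ _) hP.continuousAt
  have hpc : Continuous (fun x => ∫ s in (0:ℝ)..x, P s) :=
    continuous_iff_continuousAt.2 fun x => (hprim x).continuousAt
  have hGc : Continuous G := by
    have : G = (fun x => ∫ s in (0:ℝ)..x, P s) ∘ (fun x => max x 0) := by
      funext x; exact hG x
    rw [this]
    exact hpc.comp (by fun_prop)
  have hG0 : ∀ x, x ≤ 0 → G x = 0 := by
    intro x hx; rw [hG, max_eq_right hx]; simp
  have hGneg : ∀ x, x < 0 → HasDerivAt G 0 x := by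
    intro x hx
    refine (hasDerivAt_const x (0:ℝ)).congr_of_eventuallyEq ?_
    filter_upwards [Iio_mem_nhds hx] with y hy
    exact hG0 y (le_of_lt hy)
  have hGpos : ∀ x, 0 < x → HasDerivAt G (P x) x := by
    intro x hx
    refine (hprim x).congr_of_eventuallyEq ?_
    filter_upwards [Ioi_mem_nhds hx] with y hy
    rw [hG, max_eq_left (le_of_lt hy)]
  set T := t + 1 with hT
  have hT0 : 0 ≤ T := by linarith
  obtain ⟨M, hM⟩ := (isCompact_Icc (a := (0:ℝ)) (b := T)).exists_bound_of_continuousOn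
    hP.continuousOn
  have hM0 : 0 ≤ M := le_trans (norm_nonneg _) (hM 0 ⟨le_rfl, hT0⟩)
  have hLip : ∀ x y, x ≤ T → y ≤ T → |G x - G y| ≤ M * |x - y| := by
    intro x y hx hy
    rw [hG, hG, intervalIntegral.integral_interval_sub_left (hP.intervalIntegrable _ _)
      (hP.intervalIntegrable _ _)]
    have h1 : ‖∫ s in (max y 0)..(max x 0), P s‖ ≤ M * |max x 0 - max y 0| := by
      apply intervalIntegral.norm_integral_le_of_norm_le_const
      intro s hs
      apply hM
      have := Set.uIoc_subset_uIcc hs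
      rw [mem_uIcc] at this
      have a1 := max_le hx hT0
      have a2 := max_le hy hT0
      have a3 := le_max_right x 0
      have a4 := le_max_right y 0
      rcases this with h | h <;> constructor <;> linarith [h.1, h.2]
    refine le_trans h1 ?_
    have := abs_max_sub_max_le_max x 0 y 0
    exact mul_le_mul_of_nonneg_left (by simpa using this) hM0
  have hkm : AEStronglyMeasurable k (volume.restrict (Set.uIoc 0 T)) :=
    (intervalIntegrable_iff.1 (hk T hT0)).aestronglyMeasurable
  have key := intervalIntegral.hasDerivAt_integral_of_dominated_loc_of_lip
    (μ := volume) (a := 0) (b := T) (F := fun x s => k s * G (x - s))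
    (F' := fun s => k s * (Set.Iio t).indicator (fun s => P (t - s)) s) (x₀ := t)
    (s := Metric.ball t 1) (bound := fun s => k s * M)
    (Metric.ball_mem_nhds t one_pos)
    (Eventually.of_forall fun x => hkm.mul (by
      exact (hGc.comp (by fun_prop : Continuous fun s => x - s)).aestronglyMeasurable))
    ((hk T hT0).mul_continuousOn (by
      exact (hGc.comp (by fun_prop : Continuous fun s => t - s)).continuousOn))
    (hkm.mul (((hP.comp (by fun_prop : Continuous fun s => t - s)).measurable.indicator
      measurableSet_Iio).aestronglyMeasurable))
    (by
      refine Eventually.of_forall fun s hs => ?_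
      rw [uIoc_of_le hT0] at hs
      apply LipschitzOnWith.of_dist_le_mul
      intro x hx y hy
      rw [Real.coe_nnabs, Real.dist_eq, Real.dist_eq, ← mul_sub, abs_mul, abs_mul,
        abs_of_nonneg hM0, mul_assoc]
      rw [Metric.mem_ball, Real.dist_eq, abs_lt] at hx hy
      gcongr
      have := hLip (x - s) (y - s) (by linarith [hs.1, hx.2]) (by linarith [hs.1, hy.2])
      simpa using this)
    ((hk T hT0).mul_const M)
    (by
      filter_upwards [volume.ae_ne t] with s hs _
      apply HasDerivAt.const_mul
      rcases lt_or_gt_of_ne hs with h | h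
      · rw [indicator_of_mem (by exact h)]
        exact (hGpos (t - s) (by linarith)).comp_sub_const t s
      · rw [indicator_of_notMem (by simpa using h.le)]
        exact (hGneg (t - s) (by linarith)).comp_sub_const t s)
  obtain ⟨kint, kder⟩ := key
  have e1 : (∫ s in (0:ℝ)..T, k s * (Set.Iio t).indicator (fun s => P (t - s)) s)
      = ∫ s in (0:ℝ)..t, k s * P (t - s) := by
    have hsub : Set.uIcc 0 t ⊆ Set.uIcc 0 T := by
      rw [uIcc_of_le ht.le, uIcc_of_le hT0]; exact Icc_subset_Icc_right (by linarith)
    have hsub' : Set.uIcc t T ⊆ Set.uIcc 0 T := by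
      rw [uIcc_of_le (by linarith), uIcc_of_le hT0]; exact Icc_subset_Icc_left (by linarith)
    rw [← intervalIntegral.integral_add_adjacent_intervals (kint.mono_set hsub)
      (kint.mono_set hsub')]
    have z : (∫ s in t..T, k s * (Set.Iio t).indicator (fun s => P (t - s)) s)
        = ∫ s in t..T, (0:ℝ) := by
      apply intervalIntegral.integral_congr
      intro s hs
      rw [uIcc_of_le (by linarith)] at hs
      simp [indicator, hs.1]
    rw [z, intervalIntegral.integral_zero, add_zero]
    apply intervalIntegral.integral_congr_Ioo_of_le ht.le
    intro s hs
    simp [indicator, hs.2]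
  rw [e1] at kder
  refine kder.congr_of_eventuallyEq ?_
  filter_upwards [Ioo_mem_nhds ht (by linarith : t < T)] with x hx
  have hint : IntervalIntegrable (fun s => k s * G (x - s)) volume 0 T :=
    (hk T hT0).mul_continuousOn
      (hGc.comp (by fun_prop : Continuous fun s => x - s)).continuousOn
  have hsub : Set.uIcc 0 x ⊆ Set.uIcc 0 T := by
    rw [uIcc_of_le hx.1.le, uIcc_of_le hT0]; exact Icc_subset_Icc_right hx.2.le
  have hsub' : Set.uIcc x T ⊆ Set.uIcc 0 T := by
    rw [uIcc_of_le hx.2.le, uIcc_of_le hT0]; exact Icc_subset_Icc_left hx.1.le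
  rw [← intervalIntegral.integral_add_adjacent_intervals (hint.mono_set hsub)
      (hint.mono_set hsub')]
  have z : (∫ s in x..T, k s * G (x - s)) = ∫ s in x..T, (0:ℝ) := by
    apply intervalIntegral.integral_congr
    intro s hs
    rw [uIcc_of_le hx.2.le] at hs
    simp [hG0 (x - s) (by linarith [hs.1])]
  rw [z, intervalIntegral.integral_zero, add_zero]

/-- For `k ∈ C_{-1,0}(0,∞)` and `f ∈ C¹_{-1}(0,∞)` (i.e. `f` continuously
differentiable on `(0,∞)`, `f` and `f'` extending continuously to `0`, `f' ∈ C_{-1}`),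
the Riemann-Liouville GFD satisfies `d/dt (k*f)(t) = (k*f')(t) + f(0) k(t)`, and hence the
Caputo GFD satisfies `(∗D_{(k)} f)(t) = (k * f')(t)` for `t > 0`. -/
theorem statement3 (k f f' : ℝ → ℝ) (hk : Cm10 k)
    (hf : ∀ t : ℝ, 0 < t → HasDerivAt f (f' t) t)
    (hf'cont : ContinuousOn f' (Set.Ioi 0))
    (hf'Cm1 : Cm1 f')
    (f0 f'0 : ℝ)
    (hf0 : Filter.Tendsto f (nhdsWithin 0 (Set.Ioi 0)) (nhds f0))
    (hf'0 : Filter.Tendsto f' (nhdsWithin 0 (Set.Ioi 0)) (nhds f'0)) :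
    ∀ t : ℝ, 0 < t →
      HasDerivAt (lconv k f) (lconv k f' t + f0 * k t) t ∧
      deriv (lconv k f) t - f0 * k t = lconv k f' t := by
  intro t ht
  have hki := aux_k_int k hk
  set P : ℝ → ℝ := fun x => Function.update f' 0 f'0 (max x 0) with hPdef
  have hPpos : ∀ x, 0 < x → P x = f' x := by
    intro x hx
    simp [hPdef, max_eq_left hx.le, Function.update_of_ne hx.ne']
  have hQ : ContinuousOn (Function.update f' 0 f'0) (Set.Ici 0) := by
    rw [continuousOn_update_iff]
    have e : Set.Ici (0:ℝ) \ {0} = Set.Ioi 0 := by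
      ext x; simp [lt_iff_le_and_ne, eq_comm]
    rw [e]
    exact ⟨hf'cont, fun _ => hf'0⟩
  have hP : Continuous P :=
    hQ.comp_continuous (by fun_prop) (fun x => le_max_right x 0)
  set G : ℝ → ℝ := fun x => ∫ s in (0:ℝ)..(max x 0), P s with hGdef
  have hfG : ∀ x, 0 < x → f x = G x + f0 := by
    intro x hx
    have := intervalIntegral.integral_eq_sub_of_hasDerivAt_of_tendsto hx (f := f) (f' := P)
      (fun y hy => by rw [hPpos y hy.1]; exact hf y hy.1) (hP.intervalIntegrable _ _) hf0
      ((hf x hx).continuousAt.tendsto.mono_left nhdsWithin_le_nhds)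
    simp only [hGdef, max_eq_left hx.le]
    linarith
  have hGc : Continuous G :=
    (intervalIntegral.continuous_primitive (fun a b => hP.intervalIntegrable a b) 0).comp
      (by fun_prop : Continuous fun x : ℝ => max x 0)
  have main := aux_main k P hki hP G (fun _ => rfl) t ht
  have hkd : HasDerivAt (fun x => ∫ s in (0:ℝ)..x, k s) (k t) t :=
    intervalIntegral.integral_hasDerivAt_right (hki t ht.le)
      ((aux_k_cont k hk).stronglyMeasurableAtFilter isOpen_Ioi t ht)
      ((aux_k_cont k hk).continuousAt (Ioi_mem_nhds ht))
  have hder : HasDerivAt (lconv k f) (lconv k f' t + f0 * k t) t := by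
    have e1 : lconv k f' t = ∫ s in (0:ℝ)..t, k s * P (t - s) := by
      rw [aux_swap]
      apply intervalIntegral.integral_congr_Ioo_of_le ht.le
      intro s hs
      simp only []
      rw [hPpos (t - s) (by linarith [hs.2])]
    rw [e1]
    refine (main.add (hkd.const_mul f0)).congr_of_eventuallyEq ?_
    filter_upwards [Ioi_mem_nhds ht] with x hx
    have hx' : 0 < x := hx
    rw [aux_swap]
    simp only [Pi.add_apply]
    have hi : IntervalIntegrable (fun s => k s * G (x - s)) volume 0 x :=
      (hki x hx'.le).mul_continuousOn
        (hGc.comp (by fun_prop : Continuous fun s => x - s)).continuousOn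
    rw [← intervalIntegral.integral_const_mul, ← intervalIntegral.integral_add hi
      ((hki x hx'.le).const_mul f0)]
    apply intervalIntegral.integral_congr_Ioo_of_le hx'.le
    intro s hs
    simp only []
    rw [hfG (x - s) (by linarith [hs.2])]
    ring
  exact ⟨hder, by rw [hder.deriv]; ring⟩
end

section
/- First Fundamental Theorem for the GFD (Riemann–Liouville case): Let (κ, k) be a pair of Sonine kernels from S_{−1}. Then for every f ∈ C_{−1}(0,∞) and every t > 0, (D_{(k)} I_{(κ)} f)(t) = f(t), i.e. d/dt ∫₀ᵗ k(t−τ) (∫₀^τ κ(τ−s) f(s) ds) dτ = f(t). -/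
open Real MeasureTheory Set Filter Topology

open scoped Convolution

/-- Auxiliary class: integrable, bounded away from zero, vanishing on the nonpositive axis. -/
def GG (f : ℝ → ℝ) : Prop :=
  Integrable f ∧ (∀ ε : ℝ, 0 < ε → ∃ C : ℝ, ∀ x, ε ≤ x → |f x| ≤ C) ∧ ∀ x ≤ 0, f x = 0

/-- Scalar convolution. -/
noncomputable def cv (f g : ℝ → ℝ) : ℝ → ℝ := f ⋆[ContinuousLinearMap.mul ℝ ℝ, volume] g

lemma cv_apply (f g : ℝ → ℝ) (x : ℝ) : cv f g x = ∫ s, f s * g (x - s) := by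
  simp [cv, convolution]

lemma GG.norm {f : ℝ → ℝ} (h : GG f) : GG (fun x => ‖f x‖) :=
  ⟨h.1.norm, fun ε hε => by simpa using h.2.1 ε hε, fun x hx => by simp [h.2.2 x hx]⟩

lemma GG.bound {f g : ℝ → ℝ} (hf : GG f) (hg : GG g) (ε : ℝ) (hε : 0 < ε) :
    ∃ C : ℝ, ∀ x, ε ≤ x → ∀ s, ‖f s * g (x - s)‖ ≤ C * (‖f s‖ + ‖g (x - s)‖) := by
  obtain ⟨C, hC⟩ := hf.2.1 (ε / 2) (by linarith)
  obtain ⟨D, hD⟩ := hg.2.1 (ε / 2) (by linarith)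
  refine ⟨max C D, fun x hx s => ?_⟩
  rw [norm_mul]
  have h1 := norm_nonneg (f s)
  have h2 := norm_nonneg (g (x - s))
  have hCm := le_max_left C D
  have hDm := le_max_right C D
  rcases le_total (ε / 2) s with h | h
  · have := hC s h
    rw [← Real.norm_eq_abs] at this
    nlinarith
  · have := hD (x - s) (by linarith)
    rw [← Real.norm_eq_abs] at this
    nlinarith

lemma GG.int {f g : ℝ → ℝ} (hf : GG f) (hg : GG g) (x : ℝ) :
    Integrable (fun s => f s * g (x - s)) := by
  rcases le_or_gt x 0 with h | h
  · have : (fun s => f s * g (x - s)) = fun _ => 0 := by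
      funext s
      rcases le_or_gt s 0 with hs | hs
      · simp [hf.2.2 s hs]
      · simp [hg.2.2 (x - s) (by linarith)]
    rw [this]; exact integrable_zero _ _ _
  · obtain ⟨C, hC⟩ := hf.bound hg x h
    have hg' : Integrable (fun s => g (x - s)) := hg.1.comp_sub_left x
    refine Integrable.mono' ((hf.1.norm.add hg'.norm).const_mul C)
      (hf.1.aestronglyMeasurable.mul hg'.aestronglyMeasurable)
      (Eventually.of_forall fun s => ?_)
    simpa using hC x le_rfl s

lemma GG.exists {f g : ℝ → ℝ} (hf : GG f) (hg : GG g) (x : ℝ) :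
    ConvolutionExistsAt f g x (ContinuousLinearMap.mul ℝ ℝ) volume := by
  simpa [ConvolutionExistsAt] using hf.int hg x

lemma GG.cv {f g : ℝ → ℝ} (hf : GG f) (hg : GG g) : GG (cv f g) := by
  refine ⟨hf.1.integrable_convolution _ hg.1, fun ε hε => ?_, fun x hx => ?_⟩
  · obtain ⟨C, hC⟩ := hf.bound hg ε hε
    refine ⟨C * ((∫ s, ‖f s‖) + ∫ s, ‖g s‖), fun x hx => ?_⟩
    have hg' : Integrable (fun s => g (x - s)) := hg.1.comp_sub_left x
    rw [cv_apply, ← Real.norm_eq_abs]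
    refine (norm_integral_le_of_norm_le ((hf.1.norm.add hg'.norm).const_mul C)
      (Eventually.of_forall fun s => by simpa using hC x hx s)).trans (le_of_eq ?_)
    rw [integral_const_mul]
    simp only [Pi.add_apply]
    rw [integral_add hf.1.norm hg'.norm, integral_sub_left_eq_self (fun s => ‖g s‖)]
  · rw [cv_apply]
    apply integral_eq_zero_of_ae
    refine Eventually.of_forall fun s => ?_
    rcases le_or_gt s 0 with hs | hs
    · simp [hf.2.2 s hs]
    · simp [hg.2.2 (x - s) (by linarith)]

lemma cv_assoc {f g h : ℝ → ℝ} (hf : GG f) (hg : GG g) (hh : GG h) (x : ℝ) :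
    cv (cv f g) h x = cv f (cv g h) x := by
  unfold cv
  refine convolution_assoc _ _ _ _ (by intros; simp [mul_assoc])
    hf.1.aestronglyMeasurable hg.1.aestronglyMeasurable hh.1.aestronglyMeasurable
    (Eventually.of_forall fun y => hf.exists hg y)
    (Eventually.of_forall fun y => hg.norm.exists hh.norm y)
    (hf.norm.exists (hg.norm.cv hh.norm) x)

lemma cv_comm (f g : ℝ → ℝ) (x : ℝ) : cv f g x = cv g f x := by
  rw [cv_apply, cv_apply, ← integral_sub_left_eq_self _ volume x]
  simp [mul_comm]

lemma lconv_eq {f g f' g' : ℝ → ℝ} {t : ℝ} (ht : 0 < t)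
    (hf : ∀ s ∈ Ioo 0 t, f' s = f s) (hg : ∀ s ∈ Ioo 0 t, g' s = g s)
    (hf0 : ∀ s ≤ 0, f' s = 0) (hg0 : ∀ s ≤ 0, g' s = 0) :
    lconv f g t = cv g' f' t := by
  rw [cv_apply, lconv, intervalIntegral.integral_of_le ht.le, integral_Ioc_eq_integral_Ioo,
    ← integral_indicator measurableSet_Ioo]
  congr 1
  funext s
  by_cases hs : s ∈ Ioo 0 t
  · rw [indicator_of_mem hs, hg s hs, hf (t - s) ⟨by linarith [hs.2], by linarith [hs.1]⟩, mul_comm]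
  · rw [indicator_of_notMem hs]
    rcases le_or_gt s 0 with h | h
    · simp [hg0 s h]
    · have : t ≤ s := by
        by_contra hh
        exact hs ⟨h, not_le.1 hh⟩
      simp [hf0 (t - s) (by linarith)]

lemma Cm10.cm1 {f : ℝ → ℝ} (h : Cm10 f) : Cm1 f := by
  obtain ⟨p, h1, -, h2⟩ := h
  exact ⟨p, h1, h2⟩

lemma Cm1.contOn {f : ℝ → ℝ} (h : Cm1 f) : ContinuousOn f (Ioi 0) := by
  obtain ⟨p, h1, g, hg, hfg⟩ := h
  refine ContinuousOn.congr (f := fun t => t ^ p * g t) ?_ hfg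
  refine ContinuousOn.mul ?_ (hg.mono Ioi_subset_Ici_self)
  exact continuousOn_id.rpow_const fun x hx => Or.inl (ne_of_gt hx)

lemma Cm1.intOn {f : ℝ → ℝ} (h : Cm1 f) (t : ℝ) (ht : 0 < t) : IntegrableOn f (Ioc 0 t) := by
  obtain ⟨p, h1, g, hg, hfg⟩ := h
  have h2 : IntervalIntegrable (fun x : ℝ => x ^ p) volume 0 t :=
    intervalIntegral.intervalIntegrable_rpow' h1
  have h3 := h2.mul_continuousOn (g := g) (hg.mono (by
    rw [uIcc_of_le ht.le]; exact Icc_subset_Ici_self))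
  rw [intervalIntegrable_iff_integrableOn_Ioc_of_le ht.le] at h3
  exact h3.congr_fun (fun x hx => (hfg x hx.1).symm) measurableSet_Ioc

lemma Cm1.gg {f : ℝ → ℝ} (h : Cm1 f) (t : ℝ) (ht : 0 < t) : GG (indicator (Ioc 0 t) f) := by
  refine ⟨(integrable_indicator_iff measurableSet_Ioc).2 (h.intOn t ht), fun ε hε => ?_,
    fun x hx => indicator_of_notMem (fun hh => absurd hh.1 (not_lt.2 hx)) _⟩
  obtain ⟨C, hC⟩ := (isCompact_Icc (a := ε) (b := t)).exists_bound_of_continuousOn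
    (h.contOn.mono fun x hx => lt_of_lt_of_le hε hx.1)
  refine ⟨max C 0, fun x hx => ?_⟩
  by_cases hxt : x ∈ Ioc 0 t
  · rw [indicator_of_mem hxt]
    exact (hC x ⟨hx, hxt.2⟩).trans (le_max_left _ _)
  · rw [indicator_of_notMem hxt]
    simp

lemma main_eq (κ k : ℝ → ℝ) (hκ : Cm10 κ) (hk : Cm10 k)
    (hSonine : ∀ t : ℝ, 0 < t → lconv κ k t = 1)
    (f : ℝ → ℝ) (hf : Cm1 f) (t : ℝ) (ht : 0 < t) :
    lconv k (lconv κ f) t = ∫ s in (0:ℝ)..t, f s := by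
  have tr : ∀ (h : ℝ → ℝ), ∀ x ∈ Ioo 0 t, indicator (Ioc 0 t) h x = h x :=
    fun h x hx => indicator_of_mem (Ioo_subset_Ioc_self hx) _
  have K := hk.cm1.gg t ht
  have L := hκ.cm1.gg t ht
  have F := hf.gg t ht
  have sub : ∀ (h : ℝ → ℝ), ∀ x ∈ Ioo 0 t, ∀ s ∈ Ioo 0 x, indicator (Ioc 0 t) h s = h s :=
    fun h x hx s hs => tr h s ⟨hs.1, hs.2.trans hx.2⟩
  rw [lconv_eq (f' := indicator (Ioc 0 t) k)
    (g' := cv (indicator (Ioc 0 t) f) (indicator (Ioc 0 t) κ)) ht (tr k)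
    (fun s hs => (lconv_eq hs.1 (sub κ s hs) (sub f s hs) L.2.2 F.2.2).symm) K.2.2 (F.cv L).2.2,
    cv_assoc F L K]
  rw [← lconv_eq (f := fun _ => 1) (g := f) ht _ (tr f) (L.cv K).2.2 F.2.2]
  · simp [lconv]
  · intro s hs
    rw [cv_comm, ← lconv_eq hs.1 (sub κ s hs) (sub k s hs) L.2.2 K.2.2]
    exact hSonine s hs.1

theorem statement4 (κ k : ℝ → ℝ) (hκ : Cm10 κ) (hk : Cm10 k)
    (hSonine : ∀ t : ℝ, 0 < t → lconv κ k t = 1)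
    (f : ℝ → ℝ) (hf : Cm1 f) :
    ∀ t : ℝ, 0 < t → HasDerivAt (lconv k (lconv κ f)) (f t) t := by
  intro t ht
  have h : HasDerivAt (fun x => ∫ s in (0:ℝ)..x, f s) (f t) t := by
    refine intervalIntegral.integral_hasDerivAt_right ?_ ?_ ?_
    · rw [intervalIntegrable_iff_integrableOn_Ioc_of_le ht.le]
      exact hf.intOn t ht
    · exact ContinuousOn.stronglyMeasurableAtFilter isOpen_Ioi hf.contOn t ht
    · exact hf.contOn.continuousAt (Ioi_mem_nhds ht)
  refine h.congr_of_eventuallyEq ?_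
  filter_upwards [Ioi_mem_nhds ht] with x hx
  exact main_eq κ k hκ hk hSonine f hf x hx
end

section
/- First Fundamental Theorem for the GFD (Caputo case): Let (κ, k) be a pair of Sonine kernels from S_{−1}. Then for every f ∈ C_{−1,k}(0,∞), i.e. every f of the form f = k * φ with φ ∈ C_{−1}(0,∞), and every t > 0, (∗D_{(k)} I_{(κ)} f)(t) = f(t), where ∗D_{(k)} g = D_{(k)} g − g(0) k. -/
open Real MeasureTheory Set Filter Topology

/-- Functions continuous on the open half-line with an integrable power bound at zero. -/
def WW (f : ℝ → ℝ) (p : ℝ) : Prop :=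
  -1 < p ∧ ContinuousOn f (Ioi 0) ∧
    ∀ T : ℝ, 0 < T → ∃ C : ℝ, 0 ≤ C ∧ ∀ t ∈ Ioc 0 T, |f t| ≤ C * t ^ p

lemma Cm1.ww {f : ℝ → ℝ} (h : Cm1 f) : ∃ p, WW f p := by
  obtain ⟨p, hp, f₁, hf₁, hf⟩ := h
  refine ⟨p, hp, ?_, ?_⟩
  · have : ContinuousOn (fun t : ℝ => t ^ p * f₁ t) (Ioi 0) := by
      refine ContinuousOn.mul ?_ (hf₁.mono Ioi_subset_Ici_self)
      exact continuousOn_id.rpow_const (fun x hx => Or.inl (ne_of_gt hx))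
    exact this.congr (fun t ht => hf t ht)
  · intro T hT
    obtain ⟨C, hC⟩ := (isCompact_Icc (a := (0:ℝ)) (b := T)).exists_bound_of_continuousOn
      (hf₁.mono Icc_subset_Ici_self)
    refine ⟨C, (norm_nonneg _).trans (hC 0 ⟨le_rfl, hT.le⟩), fun t ht => ?_⟩
    rw [hf t ht.1, abs_mul, abs_of_nonneg (rpow_nonneg ht.1.le p), mul_comm]
    exact mul_le_mul_of_nonneg_right (hC t ⟨ht.1.le, ht.2⟩) (rpow_nonneg ht.1.le p)

lemma Cm10.ww {f : ℝ → ℝ} (h : Cm10 f) : ∃ p, WW f p := by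
  obtain ⟨p, hp, _, h⟩ := h
  exact Cm1.ww ⟨p, hp, h⟩

lemma WW.abs {f : ℝ → ℝ} {p : ℝ} (h : WW f p) : WW (fun x => |f x|) p := by
  refine ⟨h.1, h.2.1.abs, fun T hT => ?_⟩
  obtain ⟨C, h0, hC⟩ := h.2.2 T hT
  exact ⟨C, h0, fun t ht => by rw [abs_abs]; exact hC t ht⟩

lemma beta_left {p : ℝ} (hp : -1 < p) (q : ℝ) :
    IntervalIntegrable (fun x : ℝ => x ^ p * (1 - x) ^ q) volume 0 (1 / 2) := by
  apply IntervalIntegrable.mul_continuousOn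
  · exact intervalIntegral.intervalIntegrable_rpow' hp
  · rw [uIcc_of_le (by positivity : (0 : ℝ) ≤ 1 / 2)]
    exact ContinuousOn.rpow_const (by fun_prop) (fun x hx => Or.inl (by linarith [hx.2]))

lemma beta_int {p q : ℝ} (hp : -1 < p) (hq : -1 < q) :
    IntegrableOn (fun s : ℝ => (1 - s) ^ p * s ^ q) (Ioo 0 1) := by
  have h1 := beta_left hq p
  have h2 := ((beta_left hp q).comp_sub_left 1).symm
  have h2' : IntervalIntegrable (fun x : ℝ => x ^ q * (1 - x) ^ p) volume (1 / 2) 1 := by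
    convert h2 using 1
    · ext x; simp [mul_comm]
    · norm_num
    · norm_num
  have := h1.trans h2'
  rw [intervalIntegrable_iff_integrableOn_Ioo_of_le zero_le_one] at this
  simpa only [mul_comm] using this

lemma ww_bound {f g : ℝ → ℝ} {p q : ℝ} (hf : WW f p) (hg : WW g q) (T : ℝ) (hT : 0 < T) :
    ∃ M, 0 ≤ M ∧ ∀ t ∈ Ioc 0 T, ∀ s ∈ Ioo (0:ℝ) 1,
      |f (t - t * s) * g (t * s)| ≤ M * t ^ (p + q) * ((1 - s) ^ p * s ^ q) := by
  obtain ⟨C, h0, hC⟩ := hf.2.2 T hT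
  obtain ⟨D, h1, hD⟩ := hg.2.2 T hT
  refine ⟨C * D, mul_nonneg h0 h1, fun t ht s hs => ?_⟩
  have e1 : 0 < t * s := mul_pos ht.1 hs.1
  have e2 : 0 < t * (1 - s) := mul_pos ht.1 (by linarith [hs.2])
  have hA := hC (t - t * s) ⟨by nlinarith, by linarith [ht.2]⟩
  have hB := hD (t * s) ⟨e1, by nlinarith [ht.2]⟩
  have e3 : t - t * s = t * (1 - s) := by ring
  rw [abs_mul]
  refine (mul_le_mul hA hB (abs_nonneg _) ((abs_nonneg _).trans hA)).trans (le_of_eq ?_)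
  rw [e3, mul_rpow ht.1.le (by linarith [hs.2]), mul_rpow ht.1.le hs.1.le, rpow_add ht.1]
  ring

lemma ww_cont {f g : ℝ → ℝ} {p q : ℝ} (hf : WW f p) (hg : WW g q) {t : ℝ} (ht : 0 < t) :
    ContinuousOn (fun s => f (t - t * s) * g (t * s)) (Ioo 0 1) := by
  refine ContinuousOn.mul ?_ ?_
  · refine hf.2.1.comp (by fun_prop) (fun s hs => ?_)
    have e2 : 0 < t * (1 - s) := mul_pos ht (by linarith [hs.2])
    simp only [mem_Ioi]; nlinarith
  · exact hg.2.1.comp (by fun_prop) (fun s hs => mul_pos ht hs.1)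

lemma ww_intble {f g : ℝ → ℝ} {p q : ℝ} (hf : WW f p) (hg : WW g q) {t : ℝ} (ht : 0 < t) :
    IntegrableOn (fun s => f (t - t * s) * g (t * s)) (Ioo 0 1) := by
  obtain ⟨M, _, hM⟩ := ww_bound hf hg t ht
  refine Integrable.mono' ((beta_int hf.1 hg.1).const_mul (M * t ^ (p + q)))
    ((ww_cont hf hg ht).aestronglyMeasurable measurableSet_Ioo) ?_
  filter_upwards [ae_restrict_mem measurableSet_Ioo] with s hs
  exact hM t ⟨ht, le_rfl⟩ s hs

lemma lconv_eq_s5 {f g : ℝ → ℝ} (t : ℝ) :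
    lconv f g t = t * ∫ s in Ioo (0:ℝ) 1, f (t - t * s) * g (t * s) := by
  rw [← integral_Ioc_eq_integral_Ioo, ← intervalIntegral.integral_of_le zero_le_one, lconv]
  have := intervalIntegral.smul_integral_comp_mul_left (a := 0) (b := 1)
    (fun τ => f (t - τ) * g τ) t
  simpa using this.symm

lemma ww_intble' {f g : ℝ → ℝ} {p q : ℝ} (hf : WW f p) (hg : WW g q) {t : ℝ} (ht : 0 < t) :
    IntervalIntegrable (fun s => f (t - s) * g s) volume 0 t := by
  have h := ww_intble hf hg ht
  rw [← intervalIntegrable_iff_integrableOn_Ioo_of_le zero_le_one] at h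
  rw [← IntervalIntegrable.comp_mul_left_iff (c := t) ht.ne']
  simpa [ht.ne'] using h

lemma WW.lconv {f g : ℝ → ℝ} {p q : ℝ} (hf : WW f p) (hg : WW g q) :
    WW (lconv f g) (p + q + 1) := by
  refine ⟨by linarith [hf.1, hg.1], ?_, ?_⟩
  · have e : _root_.lconv f g = fun t => t * ∫ s in Ioo (0:ℝ) 1, f (t - t * s) * g (t * s) := by
      ext t; exact lconv_eq_s5 t
    rw [e]
    intro x hx
    have hx : 0 < x := hx
    refine ContinuousAt.continuousWithinAt (continuousAt_id.mul ?_)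
    have hnhds : Ioo (x / 2) (2 * x) ∈ 𝓝 x := Ioo_mem_nhds (by linarith) (by linarith)
    refine ContinuousOn.continuousAt (s := Ioo (x / 2) (2 * x)) ?_ hnhds
    obtain ⟨M, hM0, hM⟩ := ww_bound hf hg (2 * x) (by linarith)
    obtain ⟨N, hN⟩ := (isCompact_Icc (a := x / 2) (b := 2 * x)).exists_bound_of_continuousOn
      (f := fun t : ℝ => t ^ (p + q))
      (continuousOn_id.rpow_const (fun y hy => Or.inl (by simp only [id]; linarith [hy.1])))
    refine continuousOn_of_dominated (bound := fun s => M * N * ((1 - s) ^ p * s ^ q))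
      ?_ ?_ ((beta_int hf.1 hg.1).const_mul _) ?_
    · intro t ht
      exact (ww_cont hf hg (by linarith [ht.1])).aestronglyMeasurable measurableSet_Ioo
    · intro t ht
      filter_upwards [ae_restrict_mem measurableSet_Ioo] with s hs
      refine (hM t ⟨by linarith [ht.1], ht.2.le⟩ s hs).trans ?_
      have : t ^ (p + q) ≤ N := (le_abs_self _).trans (hN t ⟨ht.1.le, ht.2.le⟩)
      have h1 : 0 ≤ (1 - s) ^ p := rpow_nonneg (by linarith [hs.2]) _
      have h2 : 0 ≤ s ^ q := rpow_nonneg hs.1.le _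
      gcongr
    · filter_upwards [ae_restrict_mem measurableSet_Ioo] with s hs
      refine ContinuousOn.mul ?_ ?_
      · refine hf.2.1.comp (by fun_prop) (fun t ht => ?_)
        have e2 : 0 < t * (1 - s) := mul_pos (by linarith [ht.1]) (by linarith [hs.2])
        simp only [mem_Ioi]; nlinarith
      · exact hg.2.1.comp (by fun_prop) (fun t ht => mul_pos (by linarith [ht.1]) hs.1)
  · intro T hT
    obtain ⟨M, hM0, hM⟩ := ww_bound hf hg T hT
    have hB : 0 ≤ ∫ s in Ioo (0:ℝ) 1, (1 - s) ^ p * s ^ q :=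
      setIntegral_nonneg measurableSet_Ioo (fun s hs =>
        mul_nonneg (rpow_nonneg (by linarith [hs.2]) _) (rpow_nonneg hs.1.le _))
    refine ⟨M * ∫ s in Ioo (0:ℝ) 1, (1 - s) ^ p * s ^ q, mul_nonneg hM0 hB, fun t ht => ?_⟩
    rw [lconv_eq_s5, abs_mul, abs_of_pos ht.1]
    have := norm_integral_le_of_norm_le (μ := volume.restrict (Ioo (0:ℝ) 1))
      (f := fun s => f (t - t * s) * g (t * s))
      ((beta_int hf.1 hg.1).const_mul (M * t ^ (p + q))) (by
        filter_upwards [ae_restrict_mem measurableSet_Ioo] with s hs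
        exact hM t ht s hs)
    rw [integral_const_mul, norm_eq_abs] at this
    refine (mul_le_mul_of_nonneg_left this ht.1.le).trans (le_of_eq ?_)
    rw [rpow_add ht.1 (p + q) 1, rpow_one]
    ring

lemma conv_eq (f g : ℝ → ℝ) :
    convolution (indicator (Ioi 0) g) (indicator (Ioi 0) f) (ContinuousLinearMap.mul ℝ ℝ) volume
      = indicator (Ioi 0) (lconv f g) := by
  rw [← posConvolution_eq_convolution_indicator g f (ContinuousLinearMap.mul ℝ ℝ) volume]
  unfold posConvolution lconv
  simp [mul_comm]

lemma conv_exists {f g : ℝ → ℝ} {p q : ℝ} (hf : WW f p) (hg : WW g q) (t : ℝ) :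
    ConvolutionExistsAt (indicator (Ioi 0) g) (indicator (Ioi 0) f) t
      (ContinuousLinearMap.mul ℝ ℝ) volume := by
  unfold ConvolutionExistsAt
  have key : (fun τ => (ContinuousLinearMap.mul ℝ ℝ) (indicator (Ioi 0) g τ)
      (indicator (Ioi 0) f (t - τ))) = indicator (Ioo 0 t) (fun τ => f (t - τ) * g τ) := by
    ext τ
    by_cases h1 : 0 < τ <;> by_cases h2 : τ < t <;> simp [indicator, h1, h2, mul_comm]
  rw [key, integrable_indicator_iff measurableSet_Ioo]
  rcases le_or_gt t 0 with ht | ht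
  · simp [Ioo_eq_empty_of_le ht]
  · rw [← intervalIntegrable_iff_integrableOn_Ioo_of_le ht.le]
    exact ww_intble' hf hg ht

lemma WW.meas {f : ℝ → ℝ} {p : ℝ} (h : WW f p) :
    AEStronglyMeasurable (indicator (Ioi 0) f) volume :=
  (aestronglyMeasurable_indicator_iff measurableSet_Ioi).2
    (h.2.1.aestronglyMeasurable measurableSet_Ioi)

lemma norm_ind (f : ℝ → ℝ) :
    (fun x => ‖indicator (Ioi (0:ℝ)) f x‖) = indicator (Ioi 0) (fun x => |f x|) := by
  ext x
  by_cases h : 0 < x <;> simp [indicator, h]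

lemma lconv_assoc {a b c : ℝ → ℝ} {p q r : ℝ} (ha : WW a p) (hb : WW b q) (hc : WW c r)
    {t : ℝ} (ht : 0 < t) : lconv a (lconv b c) t = lconv (lconv a b) c t := by
  have h := convolution_assoc (𝕜 := ℝ) (ContinuousLinearMap.mul ℝ ℝ) (ContinuousLinearMap.mul ℝ ℝ)
    (ContinuousLinearMap.mul ℝ ℝ) (ContinuousLinearMap.mul ℝ ℝ) (μ := volume) (ν := volume)
    (f := indicator (Ioi 0) c) (g := indicator (Ioi 0) b) (k := indicator (Ioi 0) a)
    (fun x y z => by simp [mul_assoc]) (x₀ := t) hc.meas hb.meas ha.meas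
    (Eventually.of_forall fun y => conv_exists hb hc y)
    (Eventually.of_forall fun y => by
      rw [norm_ind, norm_ind]
      exact conv_exists ha.abs hb.abs y)
    (by
      rw [norm_ind, norm_ind, norm_ind, conv_eq]
      exact conv_exists (ha.abs.lconv hb.abs) hc.abs t)
  rw [conv_eq, conv_eq, conv_eq, conv_eq] at h
  simpa [indicator, ht] using h

lemma lconv_comm' (f g : ℝ → ℝ) (t : ℝ) : lconv f g t = lconv g f t := by
  unfold lconv
  have := intervalIntegral.integral_comp_sub_left (a := 0) (b := t)
    (fun τ => f (t - τ) * g τ) t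
  simp only [sub_sub_cancel, sub_self, sub_zero] at this
  rw [← this]
  simp [mul_comm]

lemma lconv_congr_left {f f' g : ℝ → ℝ} (h : ∀ t, 0 < t → f t = f' t) {t : ℝ} (ht : 0 < t) :
    lconv f g t = lconv f' g t := by
  rw [lconv_eq_s5, lconv_eq_s5]
  congr 1
  refine setIntegral_congr_fun measurableSet_Ioo (fun s hs => ?_)
  have e2 : 0 < t * (1 - s) := mul_pos ht (by linarith [hs.2])
  rw [h _ (by nlinarith)]

/-- First Fundamental Theorem for the GFD, Caputo case:
for a Sonine pair `(κ, k)` from `S_{-1}` and `f ∈ C_{-1,k}(0,∞)`, i.e. `f = k * φ` with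
`φ ∈ C_{-1}(0,∞)`, one has `(∗D_{(k)} I_{(κ)} f)(t) = f(t)` for all `t > 0`, where
`∗D_{(k)} g = D_{(k)} g - g(0)·k`. -/
theorem statement5 (κ k : ℝ → ℝ) (hκ : Cm10 κ) (hk : Cm10 k)
    (hSonine : ∀ t : ℝ, 0 < t → lconv κ k t = 1)
    (f φ : ℝ → ℝ) (hφ : Cm1 φ)
    (hf : ∀ t : ℝ, 0 < t → f t = lconv k φ t) :
    ∀ t : ℝ, 0 < t →
      DifferentiableAt ℝ (lconv k (lconv κ f)) t ∧
      deriv (lconv k (lconv κ f)) t - (lconv κ f) 0 * k t = f t := by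
  obtain ⟨p, wκ⟩ := hκ.ww
  obtain ⟨q, wk⟩ := hk.ww
  obtain ⟨r, wφ⟩ := hφ.ww
  have wf : WW f (q + r + 1) := by
    have w := wk.lconv wφ
    refine ⟨w.1, w.2.1.congr hf, fun T hT => ?_⟩
    obtain ⟨C, h0, hC⟩ := w.2.2 T hT
    exact ⟨C, h0, fun t ht => by rw [hf t ht.1]; exact hC t ht⟩
  have w1 : WW (fun _ => 1) 0 := by
    refine ⟨by norm_num, continuousOn_const, fun T hT => ⟨1, zero_le_one, fun t ht => by simp⟩⟩
  have key : ∀ t, 0 < t → lconv k (lconv κ f) t = ∫ τ in (0:ℝ)..t, f τ := by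
    intro t ht
    rw [lconv_assoc wk wκ wf ht, lconv_congr_left (f' := fun _ => 1)
      (fun s hs => by rw [lconv_comm', hSonine s hs]) ht]
    simp [lconv]
  intro t ht
  have hint : IntervalIntegrable f volume 0 t := by simpa using ww_intble' w1 wf ht
  have hd : HasDerivAt (fun u => ∫ τ in (0:ℝ)..u, f τ) (f t) t :=
    intervalIntegral.integral_hasDerivAt_right hint
      (wf.2.1.stronglyMeasurableAtFilter isOpen_Ioi t ht)
      (wf.2.1.continuousAt (Ioi_mem_nhds ht))
  have hd' : HasDerivAt (lconv k (lconv κ f)) (f t) t :=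
    hd.congr_of_eventuallyEq (by
      filter_upwards [Ioi_mem_nhds ht] with u hu
      exact key u hu)
  refine ⟨hd'.differentiableAt, ?_⟩
  rw [hd'.deriv]
  simp [lconv]
end

section
/- Second Fundamental Theorem for the GFD (Caputo case): Let (κ, k) be a pair of Sonine kernels from S_{−1}. Then for every f ∈ C¹_{−1}(0,∞) and every t > 0, (I_{(κ)} ∗D_{(k)} f)(t) = f(t) − f(0), where f(0) denotes the limit of f(t) as t → 0+. -/
open Real MeasureTheory Set Filter Topology

open scoped Convolution

lemma s7_beta_int {p q : ℝ} (hp : -1 < p) (hq : -1 < q) :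
    IntervalIntegrable (fun x : ℝ => (1 - x) ^ p * x ^ q) volume 0 1 := by
  have h := (Complex.betaIntegral_convergent (u := ((q + 1 : ℝ) : ℂ)) (v := ((p + 1 : ℝ) : ℂ))
    (by simp; linarith) (by simp; linarith)).norm
  rw [intervalIntegrable_iff_integrableOn_Ioo_of_le zero_le_one] at h ⊢
  refine h.congr_fun ?_ measurableSet_Ioo
  intro x hx
  have h1 : (1 - (x : ℂ)) = ((1 - x : ℝ) : ℂ) := by push_cast; rfl
  have h2 : (0:ℝ) < 1 - x := by linarith [hx.2]
  simp only [norm_mul]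
  rw [h1, Complex.norm_cpow_eq_rpow_re_of_pos hx.1, Complex.norm_cpow_eq_rpow_re_of_pos h2]
  simp [mul_comm]

lemma s7_scale {p q s : ℝ} (hs : 0 < s) {x : ℝ} (hx : x ∈ Ioo 0 s) :
    s ^ (p + q) * ((1 - x / s) ^ p * (x / s) ^ q) = (s - x) ^ p * x ^ q := by
  have h1 : 1 - x / s = (s - x) / s := by field_simp
  have h2 : 0 < s - x := by linarith [hx.2]
  rw [h1, Real.div_rpow h2.le hs.le, Real.div_rpow hx.1.le hs.le, Real.rpow_add hs]
  have := (Real.rpow_pos_of_pos hs p).ne'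
  have := (Real.rpow_pos_of_pos hs q).ne'
  field_simp

lemma s7_beta_int' {p q : ℝ} (hp : -1 < p) (hq : -1 < q) {s : ℝ} (hs : 0 < s) :
    IntegrableOn (fun x : ℝ => (s - x) ^ p * x ^ q) (Ioo 0 s) := by
  have h := ((s7_beta_int hp hq).comp_mul_left (c := s⁻¹)).const_mul (s ^ (p + q))
  simp only [zero_div, one_div, inv_inv] at h
  rw [intervalIntegrable_iff_integrableOn_Ioo_of_le hs.le] at h
  refine h.congr_fun ?_ measurableSet_Ioo
  intro x hx
  have := s7_scale (p := p) (q := q) hs hx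
  rw [div_eq_inv_mul] at this
  exact this

lemma s7_beta_val {p q : ℝ} {s : ℝ} (hs : 0 < s) :
    ∫ x in Ioo 0 s, (s - x) ^ p * x ^ q
      = s ^ (p + q + 1) * ∫ x in (0:ℝ)..1, (1 - x) ^ p * x ^ q := by
  have h := intervalIntegral.integral_comp_div (a := 0) (b := s)
    (fun x : ℝ => (1 - x) ^ p * x ^ q) hs.ne'
  rw [zero_div, div_self hs.ne', intervalIntegral.integral_of_le hs.le,
    integral_Ioc_eq_integral_Ioo] at h
  rw [Real.rpow_add hs, Real.rpow_one, mul_assoc, ← smul_eq_mul s, ← h, ← integral_const_mul]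
  refine setIntegral_congr_fun measurableSet_Ioo ?_
  intro x hx
  exact (s7_scale hs hx).symm

def s7Nice (T : ℝ) (g : ℝ → ℝ) : Prop :=
  AEStronglyMeasurable ((Ioo 0 T).indicator g) volume ∧
    ∃ C p : ℝ, -1 < p ∧ ∀ s ∈ Ioo 0 T, |g s| ≤ C * s ^ p

lemma s7_nice_of_Cm1 {g : ℝ → ℝ} (hg : Cm1 g) (T : ℝ) : s7Nice T g := by
  obtain ⟨p, hp, g₁, hc, h⟩ := hg
  constructor
  · rw [aestronglyMeasurable_indicator_iff measurableSet_Ioo]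
    refine ContinuousOn.aestronglyMeasurable ?_ measurableSet_Ioo
    have : ContinuousOn (fun t : ℝ => t ^ p * g₁ t) (Ioo 0 T) := by
      refine ContinuousOn.mul ?_ (hc.mono fun x hx => hx.1.le)
      exact fun x hx => (Real.continuousAt_rpow_const x p (Or.inl hx.1.ne')).continuousWithinAt
    exact this.congr fun x hx => h x hx.1
  · obtain ⟨C, hC⟩ := (isCompact_Icc (a := (0:ℝ)) (b := T)).exists_bound_of_continuousOn
      (hc.mono fun x hx => hx.1)
    refine ⟨C, p, hp, fun s hs => ?_⟩
    rw [h s hs.1, abs_mul, abs_of_pos (Real.rpow_pos_of_pos hs.1 p), mul_comm]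
    have := hC s ⟨hs.1.le, hs.2.le⟩
    rw [Real.norm_eq_abs] at this
    exact mul_le_mul_of_nonneg_right this (Real.rpow_pos_of_pos hs.1 p).le

lemma s7_nice_abs {T : ℝ} {g : ℝ → ℝ} (hg : s7Nice T g) : s7Nice T (fun x => |g x|) := by
  obtain ⟨h1, C, p, hp, h⟩ := hg
  refine ⟨?_, C, p, hp, fun s hs => by simpa using h s hs⟩
  refine h1.norm.congr (Eventually.of_forall fun x => ?_)
  by_cases hx : x ∈ Ioo 0 T
  · simp only [indicator_of_mem hx, Real.norm_eq_abs]
  · simp only [indicator_of_notMem hx, norm_zero]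

lemma s7_prod_int {T : ℝ} {a b : ℝ → ℝ} (ha : s7Nice T a) (hb : s7Nice T b) {s : ℝ} (hs : 0 < s)
    (hsT : s ≤ T) : IntegrableOn (fun τ => a (s - τ) * b τ) (Ioo 0 s) := by
  obtain ⟨ma, C, p, hp, h⟩ := ha
  obtain ⟨mb, D, q, hq, h'⟩ := hb
  refine Integrable.mono' ((s7_beta_int' hp hq hs).const_mul (C * D)) ?_ ?_
  · have m1 : AEStronglyMeasurable (fun τ => (Ioo 0 T).indicator a (s - τ)) volume :=
      ma.comp_quasiMeasurePreserving (quasiMeasurePreserving_sub_left_of_right_invariant volume s)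
    refine ((m1.mul mb).restrict (s := Ioo 0 s)).congr ?_
    filter_upwards [ae_restrict_mem measurableSet_Ioo] with x hx
    have e1 : s - x ∈ Ioo 0 T := ⟨by linarith [hx.2], by linarith [hx.1]⟩
    have e2 : x ∈ Ioo 0 T := ⟨hx.1, by linarith [hx.2]⟩
    simp only [Pi.mul_apply]
    rw [indicator_of_mem e1, indicator_of_mem e2]
  · filter_upwards [ae_restrict_mem measurableSet_Ioo] with x hx
    have e1 : s - x ∈ Ioo 0 T := ⟨by linarith [hx.2], by linarith [hx.1]⟩
    have e2 : x ∈ Ioo 0 T := ⟨hx.1, by linarith [hx.2]⟩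
    rw [Real.norm_eq_abs, abs_mul]
    calc |a (s - x)| * |b x| ≤ (C * (s - x) ^ p) * (D * x ^ q) :=
          mul_le_mul (h _ e1) (h' _ e2) (abs_nonneg _) ((abs_nonneg _).trans (h _ e1))
      _ = _ := by ring

lemma s7_lconv_Ioo (a b : ℝ → ℝ) {s : ℝ} (hs : 0 ≤ s) :
    lconv a b s = ∫ τ in Ioo 0 s, a (s - τ) * b τ := by
  rw [lconv, intervalIntegral.integral_of_le hs, integral_Ioc_eq_integral_Ioo]

lemma s7_nice_integrable {T : ℝ} {a : ℝ → ℝ} (ha : s7Nice T a) :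
    Integrable ((Ioo 0 T).indicator a) := by
  obtain ⟨ma, C, p, hp, h⟩ := ha
  rw [integrable_indicator_iff measurableSet_Ioo]
  rw [aestronglyMeasurable_indicator_iff measurableSet_Ioo] at ma
  rcases le_or_gt T 0 with hT | hT
  · simp [Ioo_eq_empty (not_lt.2 hT)]
  have := intervalIntegral.intervalIntegrable_rpow' (a := 0) (b := T) hp
  rw [intervalIntegrable_iff_integrableOn_Ioo_of_le hT.le] at this
  refine Integrable.mono' (this.const_mul C) ma ?_
  filter_upwards [ae_restrict_mem measurableSet_Ioo] with x hx using h x hx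

lemma s7_conv_integrand {T : ℝ} {a b A B : ℝ → ℝ} (hA0 : ∀ x ≤ 0, A x = 0)
    (hB0 : ∀ x ≤ 0, B x = 0) (hA : ∀ x ∈ Ioo 0 T, A x = a x) (hB : ∀ x ∈ Ioo 0 T, B x = b x)
    {s : ℝ} (hsT : s ≤ T) :
    (fun τ => B τ * A (s - τ)) = (Ioo 0 s).indicator (fun τ => a (s - τ) * b τ) := by
  ext τ
  by_cases h : τ ∈ Ioo 0 s
  · rw [indicator_of_mem h, hA _ ⟨by linarith [h.2], by linarith [h.1]⟩,
      hB _ ⟨h.1, by linarith [h.2]⟩, mul_comm]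
  · rw [indicator_of_notMem h]
    rcases le_or_gt τ 0 with h0 | h0
    · rw [hB0 _ h0, zero_mul]
    · rw [hA0 (s - τ), mul_zero]
      by_contra hh
      exact h ⟨h0, by linarith⟩

lemma s7_conv_eq {T : ℝ} {a b A B : ℝ → ℝ} (hA0 : ∀ x ≤ 0, A x = 0)
    (hB0 : ∀ x ≤ 0, B x = 0) (hA : ∀ x ∈ Ioo 0 T, A x = a x) (hB : ∀ x ∈ Ioo 0 T, B x = b x)
    {s : ℝ} (hs : 0 ≤ s) (hsT : s ≤ T) :
    (B ⋆[ContinuousLinearMap.mul ℝ ℝ, volume] A) s = lconv a b s := by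
  rw [s7_lconv_Ioo a b hs, convolution_def]
  simp only [ContinuousLinearMap.mul_apply']
  rw [s7_conv_integrand hA0 hB0 hA hB hsT, integral_indicator measurableSet_Ioo]

lemma s7_conv_zero {A B : ℝ → ℝ} (hA0 : ∀ x ≤ 0, A x = 0)
    (hB0 : ∀ x ≤ 0, B x = 0) : ∀ s ≤ 0,
    (B ⋆[ContinuousLinearMap.mul ℝ ℝ, volume] A) s = 0 := by
  intro s hs
  rw [convolution_def]
  simp only [ContinuousLinearMap.mul_apply']
  rw [s7_conv_integrand (T := s) hA0 hB0 (fun x _ => rfl) (fun x _ => rfl) le_rfl,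
    Ioo_eq_empty (not_lt.2 hs)]
  simp

lemma s7_ind0 (T : ℝ) (a : ℝ → ℝ) : ∀ x ≤ 0, (Ioo 0 T).indicator a x = 0 :=
  fun x hx => indicator_of_notMem (fun h => absurd h.1 (not_lt.2 hx)) _

lemma s7_ind1 (T : ℝ) (a : ℝ → ℝ) : ∀ x ∈ Ioo 0 T, (Ioo 0 T).indicator a x = a x :=
  fun x hx => indicator_of_mem hx _

lemma s7_nice_lconv {T : ℝ} {a b : ℝ → ℝ} (ha : s7Nice T a) (hb : s7Nice T b) :
    s7Nice T (lconv a b) := by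
  constructor
  · have h := ((s7_nice_integrable hb).integrable_convolution (ContinuousLinearMap.mul ℝ ℝ)
      (s7_nice_integrable ha)).aestronglyMeasurable.indicator
        (measurableSet_Ioo (a := (0:ℝ)) (b := T))
    refine h.congr (Eventually.of_forall fun x => ?_)
    by_cases hx : x ∈ Ioo 0 T
    · rw [indicator_of_mem hx, indicator_of_mem hx]
      exact s7_conv_eq (s7_ind0 T a) (s7_ind0 T b) (s7_ind1 T a) (s7_ind1 T b)
        hx.1.le hx.2.le
    · rw [indicator_of_notMem hx, indicator_of_notMem hx]
  · obtain ⟨ma, C, p, hp, h⟩ := ha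
    obtain ⟨mb, D, q, hq, h'⟩ := hb
    refine ⟨C * D * ∫ x in (0:ℝ)..1, (1 - x) ^ p * x ^ q, p + q + 1, by linarith, fun s hs => ?_⟩
    rw [s7_lconv_Ioo a b hs.1.le]
    have := norm_integral_le_of_norm_le (μ := volume.restrict (Ioo 0 s))
      (f := fun τ => a (s - τ) * b τ) ((s7_beta_int' hp hq hs.1).const_mul (C * D)) (by
      filter_upwards [ae_restrict_mem measurableSet_Ioo] with x hx
      have e1 : s - x ∈ Ioo 0 T := ⟨by linarith [hx.2], by linarith [hx.1, hs.2]⟩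
      have e2 : x ∈ Ioo 0 T := ⟨hx.1, by linarith [hx.2, hs.2]⟩
      rw [Real.norm_eq_abs, abs_mul]
      calc |a (s - x)| * |b x| ≤ (C * (s - x) ^ p) * (D * x ^ q) :=
            mul_le_mul (h _ e1) (h' _ e2) (abs_nonneg _) ((abs_nonneg _).trans (h _ e1))
        _ = _ := by ring)
    rw [Real.norm_eq_abs, integral_const_mul, s7_beta_val hs.1] at this
    refine this.trans (le_of_eq ?_)
    ring

lemma s7_assoc {T : ℝ} (hT : 0 < T) {a b c : ℝ → ℝ} (ha : s7Nice T a) (hb : s7Nice T b)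
    (hc : s7Nice T c) : lconv (lconv a b) c T = lconv a (lconv b c) T := by
  have key := convolution_assoc (ContinuousLinearMap.mul ℝ ℝ) (ContinuousLinearMap.mul ℝ ℝ)
    (ContinuousLinearMap.mul ℝ ℝ) (ContinuousLinearMap.mul ℝ ℝ) (μ := volume) (ν := volume)
    (f := (Ioo 0 T).indicator c) (g := (Ioo 0 T).indicator b) (k := (Ioo 0 T).indicator a)
    (x₀ := T) (fun x y z => by simp [mul_assoc]) hc.1 hb.1 ha.1
    ((s7_nice_integrable hc).ae_convolution_exists _ (s7_nice_integrable hb))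
    ((s7_nice_integrable hb).norm.ae_convolution_exists _ (s7_nice_integrable ha).norm)
    (by
      have na := s7_nice_abs ha
      have nb := s7_nice_abs hb
      have nc := s7_nice_abs hc
      have z : ∀ g : ℝ → ℝ, ∀ x ≤ 0, ‖(Ioo 0 T).indicator g x‖ = 0 := fun g x hx => by
        rw [s7_ind0 T g x hx, norm_zero]
      have o : ∀ g : ℝ → ℝ, ∀ x ∈ Ioo 0 T, ‖(Ioo 0 T).indicator g x‖ = |g x| := fun g x hx => by
        rw [s7_ind1 T g x hx, Real.norm_eq_abs]
      unfold ConvolutionExistsAt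
      simp only [ContinuousLinearMap.mul_apply']
      rw [s7_conv_integrand (T := T) (b := fun x => |c x|)
        (a := lconv (fun x => |a x|) (fun x => |b x|))
        (s7_conv_zero (z a) (z b)) (z c)
        (fun x hx => s7_conv_eq (z a) (z b) (o a) (o b) hx.1.le hx.2.le) (o c) le_rfl]
      rw [integrable_indicator_iff measurableSet_Ioo]
      exact s7_prod_int (s7_nice_lconv na nb) nc hT le_rfl)
  rw [s7_conv_eq (T := T) (a := a) (b := lconv b c) (s7_ind0 T a)
      (s7_conv_zero (s7_ind0 T b) (s7_ind0 T c)) (s7_ind1 T a)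
      (fun x hx => s7_conv_eq (s7_ind0 T b) (s7_ind0 T c) (s7_ind1 T b) (s7_ind1 T c)
        hx.1.le hx.2.le) hT.le le_rfl,
    s7_conv_eq (T := T) (a := lconv a b) (b := c) 
      (s7_conv_zero (s7_ind0 T a) (s7_ind0 T b)) (s7_ind0 T c) 
      (fun x hx => s7_conv_eq (s7_ind0 T a) (s7_ind0 T b) (s7_ind1 T a) (s7_ind1 T b)
        hx.1.le hx.2.le) (s7_ind1 T c) hT.le le_rfl] at key
  exact key.symm

lemma s7_lconv_one_right (g : ℝ → ℝ) (t : ℝ) : lconv g (fun _ => 1) t = ∫ x in (0:ℝ)..t, g x := by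
  simp [lconv, intervalIntegral.integral_comp_sub_left]

lemma s7_Cm1_one : Cm1 (fun _ => 1) :=
  ⟨0, by norm_num, fun _ => 1, continuousOn_const, fun t _ => by simp⟩

lemma s7_nice_ii {T : ℝ} (hT : 0 < T) {a : ℝ → ℝ} (ha : s7Nice T a) :
    IntervalIntegrable a volume 0 T := by
  rw [intervalIntegrable_iff_integrableOn_Ioo_of_le hT.le,
    ← integrable_indicator_iff measurableSet_Ioo]
  exact s7_nice_integrable ha

theorem statement7 (κ k : ℝ → ℝ) (hκ : Cm10 κ) (hk : Cm10 k)
    (hSonine : ∀ t : ℝ, 0 < t → lconv κ k t = 1)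
    (f : ℝ → ℝ) (f0 : ℝ)
    (hf_diff : ∀ t : ℝ, 0 < t → DifferentiableAt ℝ f t)
    (hf' : Cm1 (deriv f))
    (hf0 : Filter.Tendsto f (nhdsWithin 0 (Set.Ioi 0)) (nhds f0)) :
    ∀ t : ℝ, 0 < t →
      lconv κ (fun s => deriv (lconv k f) s - f0 * k s) t = f t - f0 := by
  intro t ht
  have cm : ∀ {g}, Cm10 g → Cm1 g := fun ⟨p, h1, _, h3⟩ => ⟨p, h1, h3⟩
  have nκ := s7_nice_of_Cm1 (cm hκ)
  have nk := s7_nice_of_Cm1 (cm hk)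
  have nf := s7_nice_of_Cm1 hf'
  have n1 := s7_nice_of_Cm1 s7_Cm1_one
  have ftc : ∀ x, 0 < x → ∫ y in (0:ℝ)..x, deriv f y = f x - f0 := by
    intro x hx
    refine intervalIntegral.integral_eq_sub_of_hasDerivAt_of_tendsto hx
      (fun y hy => (hf_diff y hy.1).hasDerivAt) (s7_nice_ii hx (nf x)) hf0 ?_
    exact (hf_diff x hx).continuousAt.tendsto.mono_left nhdsWithin_le_nhds
  have rep : ∀ x, 0 < x → lconv k f x = ∫ y in (0:ℝ)..x, (f0 * k y + lconv k (deriv f) y) := by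
    intro x hx
    rw [intervalIntegral.integral_add ((s7_nice_ii hx (nk x)).const_mul f0)
      (s7_nice_ii hx (s7_nice_lconv (nk x) (nf x))), intervalIntegral.integral_const_mul,
      ← s7_lconv_one_right, ← s7_lconv_one_right, s7_assoc hx (nk x) (nf x) (n1 x),
      s7_lconv_Ioo _ _ hx.le, s7_lconv_Ioo _ _ hx.le, s7_lconv_Ioo _ _ hx.le,
      ← integral_const_mul, ← integral_add]
    · refine setIntegral_congr_fun measurableSet_Ioo ?_
      intro y hy
      simp only
      rw [s7_lconv_one_right, ftc y hy.1]
      ring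
    · exact (s7_prod_int (nk x) (n1 x) hx le_rfl).const_mul f0
    · exact s7_prod_int (nk x) (s7_nice_lconv (nf x) (n1 x)) hx le_rfl
  have hint : IntervalIntegrable (fun y => f0 * k y + lconv k (deriv f) y) volume 0 t :=
    ((s7_nice_ii ht (nk t)).const_mul f0).add (s7_nice_ii ht (s7_nice_lconv (nk t) (nf t)))
  have hd : ∀ᵐ s, s ∈ Ioo 0 t → deriv (lconv k f) s - f0 * k s = lconv k (deriv f) s := by
    filter_upwards [hint.ae_hasDerivAt_integral] with s hs hst
    rw [uIcc_of_le ht.le] at hs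
    have h1 := hs ⟨hst.1.le, hst.2.le⟩ 0 ⟨le_rfl, ht.le⟩
    have h2 : lconv k f =ᶠ[𝓝 s]
        fun x => ∫ y in (0:ℝ)..x, (f0 * k y + lconv k (deriv f) y) := by
      filter_upwards [Ioi_mem_nhds hst.1] with x hx using rep x hx
    rw [h2.deriv_eq, h1.deriv]
    ring
  have e1 : lconv κ (fun s => deriv (lconv k f) s - f0 * k s) t
      = lconv κ (lconv k (deriv f)) t := by
    rw [s7_lconv_Ioo _ _ ht.le, s7_lconv_Ioo _ _ ht.le]
    refine setIntegral_congr_ae measurableSet_Ioo ?_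
    filter_upwards [hd] with s hs hst
    rw [hs hst]
  rw [e1, ← s7_assoc ht (nκ t) (nk t) (nf t), ← ftc t ht, s7_lconv_Ioo _ _ ht.le,
    intervalIntegral.integral_of_le ht.le, integral_Ioc_eq_integral_Ioo]
  refine setIntegral_congr_fun measurableSet_Ioo ?_
  intro s hs
  simp only
  rw [hSonine _ (by linarith [hs.2]), one_mul]
end
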